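/- Monotone many-party amplification of SSI: if (ε, D^{2^r t}, 2^r n)-SSI holds against 2 parties, then for all 0 ≤ j ≤ r, ((2^{j+1} − 1)·ε, D^{2^{r−j} t}, 2^{r−j} n)-SSI holds against 2^{j+1} parties. Consequently, if (ε, D^{qt}, qn)-SSI holds against 2 parties then (2qε, D^t, n)-SSI holds against q parties. -/

import Mathlib

open Matrix
open scoped ComplexOrder

/-- A density matrix: positive semidefinite with unit trace. -/
def IsDensity {m : Type*} [Fintype m] [DecidableEq m] (ρ : Matrix m m ℂ) : Prop :=
  ρ.PosSemidef ∧ ρ.trace = 1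

/-- A POVM indexed by outcomes in `O`. -/
def IsPOVM {m O : Type*} [Fintype m] [DecidableEq m] [Fintype O]
    (M : O → Matrix m m ℂ) : Prop :=
  (∀ o, (M o).PosSemidef) ∧ ∑ o, M o = 1

/-- The state where all q parties hold t copies of the same sample from the
ensemble {(w i, v i)}: entrywise E_i[ w i · (ψ_i ψ_i†)^{⊗ qt} ]. -/
noncomputable def chiId (q t V : ℕ) {ι : Type*} [Fintype ι]
    (w : ι → ℝ) (v : ι → Fin V → ℂ) :
    Matrix (Fin q → Fin t → Fin V) (Fin q → Fin t → Fin V) ℂ :=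
  Matrix.of fun x x' => ∑ i, (w i : ℂ) * (∏ j, ∏ c, v i (x j c)) *
    (starRingEnd ℂ) (∏ j, ∏ c, v i (x' j c))

/-- The state where the q parties hold t copies of independent samples from the
ensemble {(w i, v i)}. -/
noncomputable def chiInd (q t V : ℕ) {ι : Type*} [Fintype ι]
    (w : ι → ℝ) (v : ι → Fin V → ℂ) :
    Matrix (Fin q → Fin t → Fin V) (Fin q → Fin t → Fin V) ℂ :=
  Matrix.of fun x x' => ∏ j, ∑ i, (w i : ℂ) * (∏ c, v i (x j c)) *
    (starRingEnd ℂ) (∏ c, v i (x' j c))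

/-- Probability that the q-party non-local adversary (entangled state ρ, party
POVMs M j) produces the joint output o on the q-partite input state χ, via
Tr[(⊗_j M_j(o j)) (ρ ⊗ χ)]. -/
noncomputable def qProb (q t n V : ℕ) (k : Fin q → ℕ)
    (ρ : Matrix ((j : Fin q) → Fin (k j)) ((j : Fin q) → Fin (k j)) ℂ)
    (M : (j : Fin q) → (Fin n → Bool) →
      Matrix (Fin (k j) × (Fin t → Fin V)) (Fin (k j) × (Fin t → Fin V)) ℂ)
    (χ : Matrix (Fin q → Fin t → Fin V) (Fin q → Fin t → Fin V) ℂ)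
    (o : Fin q → Fin n → Bool) : ℝ :=
  (∑ e : (j : Fin q) → Fin (k j), ∑ x : Fin q → Fin t → Fin V,
   ∑ e' : (j : Fin q) → Fin (k j), ∑ x' : Fin q → Fin t → Fin V,
     (∏ j, M j (o j) (e j, x j) (e' j, x' j)) * ρ e' e * χ x' x).re

/-- (ε, D^t, n)-simultaneous state indistinguishability against q parties, for the
ensemble D = {(w i, v i)}: every q-party non-local adversary, on any output set S,
distinguishes the identical-sample state from the independent-sample state with
advantage at most ε. -/
def SSIq (ε : ℝ) (q t n V : ℕ) {ι : Type*} [Fintype ι]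
    (w : ι → ℝ) (v : ι → Fin V → ℂ) : Prop :=
  ∀ (k : Fin q → ℕ)
    (ρ : Matrix ((j : Fin q) → Fin (k j)) ((j : Fin q) → Fin (k j)) ℂ)
    (M : (j : Fin q) → (Fin n → Bool) →
      Matrix (Fin (k j) × (Fin t → Fin V)) (Fin (k j) × (Fin t → Fin V)) ℂ),
    IsDensity ρ → (∀ j, IsPOVM (M j)) →
    ∀ S : Finset (Fin q → Fin n → Bool),
      |∑ o ∈ S, (qProb q t n V k ρ M (chiId q t V w v) o -
                 qProb q t n V k ρ M (chiInd q t V w v) o)| ≤ ε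

set_option linter.all false
set_option linter.unusedSectionVars false
set_option linter.unusedSimpArgs false


/-- Tensor product of matrices over a finite index type. -/
def tens {J : Type*} [Fintype J] {E : J → Type*} (X : (j : J) → Matrix (E j) (E j) ℂ) :
    Matrix ((j : J) → E j) ((j : J) → E j) ℂ :=
  Matrix.of fun e e' => ∏ j, X j (e j) (e' j)

/-- Trace pairing. -/
noncomputable def tv {E : Type*} [Fintype E] (X ρ : Matrix E E ℂ) : ℂ :=
  ∑ e, ∑ e', X e e' * ρ e' e

lemma psd_eq_conj {E : Type*} [Fintype E] [DecidableEq E] {X : Matrix E E ℂ}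
    (h : X.PosSemidef) : ∃ K : Matrix E E ℂ, X = Kᴴ * K := by
  open scoped MatrixOrder in
  exact CStarAlgebra.nonneg_iff_eq_star_mul_self.mp h.nonneg

section tens
variable {J : Type*} [Fintype J] [DecidableEq J] {E : J → Type*} [∀ j, Fintype (E j)]
  [∀ j, DecidableEq (E j)]

lemma tens_mul (X Y : (j : J) → Matrix (E j) (E j) ℂ) :
    tens X * tens Y = tens (fun j => X j * Y j) := by
  ext e e'
  simp only [tens, Matrix.mul_apply, Matrix.of_apply, Fintype.prod_sum, Finset.prod_mul_distrib]

lemma tens_conjTranspose (X : (j : J) → Matrix (E j) (E j) ℂ) :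
    (tens X)ᴴ = tens (fun j => (X j)ᴴ) := by
  ext e e'
  simp [tens, Matrix.conjTranspose_apply]

lemma tens_psd {X : (j : J) → Matrix (E j) (E j) ℂ} (h : ∀ j, (X j).PosSemidef) :
    (tens X).PosSemidef := by
  choose K hK using fun j => psd_eq_conj (h j)
  have : tens X = (tens K)ᴴ * tens K := by
    rw [tens_conjTranspose, tens_mul]
    congr 1
    funext j
    exact hK j
  rw [this]
  exact posSemidef_conjTranspose_mul_self _

lemma tens_one : tens (fun j => (1 : Matrix (E j) (E j) ℂ)) = 1 := by
  ext e e'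
  simp only [tens, Matrix.of_apply, Matrix.one_apply]
  by_cases h : e = e'
  · subst h; simp
  · rw [if_neg h]
    obtain ⟨j, hj⟩ := Function.ne_iff.mp h
    exact Finset.prod_eq_zero (Finset.mem_univ j) (by simp [hj])

lemma sum_tens {O : J → Type*} [∀ j, Fintype (O j)]
    (X : (j : J) → O j → Matrix (E j) (E j) ℂ) :
    ∑ o : (j : J) → O j, tens (fun j => X j (o j)) = tens (fun j => ∑ o, X j o) := by
  ext e e'
  simp only [tens, Matrix.sum_apply, Matrix.of_apply, Fintype.prod_sum]

end tens

/-- Compression of an operator by `t` copies of a pure state. -/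
noncomputable def cpr {V : ℕ} {T E : Type*} [Fintype T] [DecidableEq T] (ψ : Fin V → ℂ)
    (M : Matrix (E × (T → Fin V)) (E × (T → Fin V)) ℂ) : Matrix E E ℂ :=
  Matrix.of fun e e' => ∑ x : T → Fin V, ∑ x' : T → Fin V,
    M (e, x) (e', x') * ((∏ c, ψ (x' c)) * (starRingEnd ℂ) (∏ c, ψ (x c)))

section cpr
variable {V : ℕ} {T E : Type*} [Fintype T] [DecidableEq T] [Fintype E] [DecidableEq E]

lemma norm_prod_copies {ψ : Fin V → ℂ} (hψ : ∑ a, ‖ψ a‖ ^ 2 = 1) :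
    ∑ x : T → Fin V, (∏ c, ψ (x c)) * (starRingEnd ℂ) (∏ c, ψ (x c)) = 1 := by
  have h : ∑ a, ψ a * (starRingEnd ℂ) (ψ a) = 1 := by
    simp only [Complex.mul_conj']
    exact_mod_cast hψ
  simp only [map_prod, ← Finset.prod_mul_distrib]
  rw [← Fintype.prod_sum (fun (_ : T) a => ψ a * (starRingEnd ℂ) (ψ a))]
  simp [h]

lemma cpr_eq (ψ : Fin V → ℂ) (M : Matrix (E × (T → Fin V)) (E × (T → Fin V)) ℂ) :
    cpr ψ M = (Matrix.of fun (p : E × (T → Fin V)) (e : E) =>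
        if p.1 = e then ∏ c, ψ (p.2 c) else 0)ᴴ * M *
      (Matrix.of fun (p : E × (T → Fin V)) (e : E) =>
        if p.1 = e then ∏ c, ψ (p.2 c) else 0) := by
  ext e e'
  simp only [cpr, Matrix.mul_apply, Matrix.of_apply, Matrix.conjTranspose_apply,
    Fintype.sum_prod_type, Finset.sum_mul]
  have h1 : ∀ (a : E) (y : T → Fin V) (b : E) (z : T → Fin V),
      star (if b = e then ∏ c, ψ (z c) else 0) * M (b, z) (a, y) *
        (if a = e' then ∏ c, ψ (y c) else 0) =
      if a = e' then (if b = e then M (b, z) (a, y) * ((∏ c, ψ (y c)) *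
        (starRingEnd ℂ) (∏ c, ψ (z c))) else 0) else 0 := by
    intro a y b z
    split_ifs <;> simp
    ring
  simp only [h1]
  rw [Finset.sum_eq_single e' (by intro b _ hb; simp [hb]) (by simp)]
  simp only [if_true]
  have h2 : ∀ y : T → Fin V, (∑ b : E, ∑ z : T → Fin V, if b = e then
      M (b, z) (e', y) * ((∏ c, ψ (y c)) * (starRingEnd ℂ) (∏ c, ψ (z c))) else 0) =
      ∑ z : T → Fin V, M (e, z) (e', y) * ((∏ c, ψ (y c)) *
        (starRingEnd ℂ) (∏ c, ψ (z c))) := by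
    intro y
    rw [Finset.sum_eq_single e (by intro b _ hb; simp [hb]) (by simp)]
    simp
  simp only [h2]
  rw [Finset.sum_comm]

lemma cpr_psd (ψ : Fin V → ℂ) {M : Matrix (E × (T → Fin V)) (E × (T → Fin V)) ℂ}
    (h : M.PosSemidef) : (cpr ψ M).PosSemidef := by
  rw [cpr_eq]
  exact h.conjTranspose_mul_mul_same _

lemma cpr_one {ψ : Fin V → ℂ} (hψ : ∑ a, ‖ψ a‖ ^ 2 = 1) :
    cpr ψ (1 : Matrix (E × (T → Fin V)) (E × (T → Fin V)) ℂ) = 1 := by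
  ext e e'
  simp only [cpr, Matrix.of_apply, Matrix.one_apply, Prod.mk.injEq]
  by_cases h : e = e'
  · subst h
    simp only [true_and, if_true, ite_mul, one_mul, zero_mul, Finset.sum_ite_eq, Finset.mem_univ]
    exact norm_prod_copies hψ
  · simp [h]

lemma cpr_sum {O : Type*} (s : Finset O) (ψ : Fin V → ℂ)
    (M : O → Matrix (E × (T → Fin V)) (E × (T → Fin V)) ℂ) :
    cpr ψ (∑ o ∈ s, M o) = ∑ o ∈ s, cpr ψ (M o) := by
  simp only [cpr_eq, Matrix.mul_sum, Matrix.sum_mul]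

end cpr

/-- A family of compressed POVMs. -/
def IsComp {V : ℕ} {ι : Type*} (v : ι → Fin V → ℂ) (T : Type) [Fintype T] [DecidableEq T]
    {E O : Type} [Fintype E] [DecidableEq E] [Fintype O] (N : O → ι → Matrix E E ℂ) : Prop :=
  ∃ M : O → Matrix (E × (T → Fin V)) (E × (T → Fin V)) ℂ, IsPOVM M ∧
    ∀ o i, N o i = cpr (v i) (M o)

namespace IsComp
variable {V : ℕ} {ι : Type*} {v : ι → Fin V → ℂ} {T : Type} [Fintype T] [DecidableEq T]
    {E O : Type} [Fintype E] [DecidableEq E] [Fintype O] {N : O → ι → Matrix E E ℂ}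

lemma psd (h : IsComp v T N) (o : O) (i : ι) : (N o i).PosSemidef := by
  obtain ⟨M, hM, hN⟩ := h
  rw [hN]
  exact cpr_psd _ (hM.1 o)

lemma sum_eq (h : IsComp v T N) (hv : ∀ i, ∑ a, ‖v i a‖ ^ 2 = 1) (i : ι) :
    ∑ o, N o i = 1 := by
  obtain ⟨M, hM, hN⟩ := h
  simp only [hN]
  rw [← cpr_sum, hM.2, cpr_one (hv i)]

lemma reindex (h : IsComp v T N) {E' : Type} [Fintype E'] [DecidableEq E'] (φ : E' ≃ E) :
    IsComp v T (fun o i => (N o i).submatrix φ φ) := by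
  obtain ⟨M, hM, hN⟩ := h
  refine ⟨fun o => (M o).submatrix (φ.prodCongr (Equiv.refl _)) (φ.prodCongr (Equiv.refl _)),
    ⟨fun o => (hM.1 o).submatrix _, ?_⟩, ?_⟩
  · have := congrArg (fun A => A.submatrix (φ.prodCongr (Equiv.refl (T → Fin V)))
      (φ.prodCongr (Equiv.refl _))) hM.2
    simp only [Matrix.submatrix_one_equiv] at this
    rw [← this]
    ext
    simp [Matrix.sum_apply]
  · intro o i
    ext e e'
    simp [hN, cpr]

lemma push (h : IsComp v T N) {O' : Type} [Fintype O'] [DecidableEq O'] (g : O → O') :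
    IsComp v T (fun o' i => ∑ o, if g o = o' then N o i else 0) := by
  obtain ⟨M, hM, hN⟩ := h
  refine ⟨fun o' => ∑ o with g o = o', M o, ⟨fun o => posSemidef_sum _ fun o _ => hM.1 o, ?_⟩, ?_⟩
  · rw [← hM.2]
    exact Finset.sum_fiberwise _ _ _
  · intro o i
    rw [cpr_sum, Finset.sum_filter]
    simp only [hN]

lemma push_emb (h : IsComp v T N) {O' : Type} [Fintype O'] (g : O ↪ O') :
    ∃ N' : O' → ι → Matrix E E ℂ, IsComp v T N' ∧ ∀ o, N' (g o) = N o := by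
  classical
  refine ⟨_, h.push g, fun o => ?_⟩
  funext i
  simp [g.injective.eq_iff]

lemma reT (h : IsComp v T N) {T' : Type} [Fintype T'] [DecidableEq T'] (τ : T ≃ T') :
    IsComp v T' N := by
  obtain ⟨M, hM, hN⟩ := h
  let φ : E × (T' → Fin V) ≃ E × (T → Fin V) :=
    (Equiv.refl E).prodCongr (τ.symm.arrowCongr (Equiv.refl _))
  refine ⟨fun o => (M o).submatrix φ φ, ⟨fun o => (hM.1 o).submatrix _, ?_⟩, ?_⟩
  · have := congrArg (fun A => A.submatrix φ φ) hM.2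
    simp only [Matrix.submatrix_one_equiv] at this
    rw [← this]
    ext
    simp [Matrix.sum_apply]
  · intro o i
    ext e e'
    simp only [hN, cpr, Matrix.of_apply, Matrix.submatrix_apply]
    have hp : ∀ x : T' → Fin V, ∏ c, v i ((τ.symm.arrowCongr (Equiv.refl (Fin V))) x c) =
        ∏ c, v i (x c) := by
      intro x
      simp only [Equiv.arrowCongr_apply, Equiv.symm_symm, Equiv.coe_refl, Function.comp_apply, id]
      exact Equiv.prod_comp τ (fun c => v i (x c))
    rw [← Equiv.sum_comp (τ.symm.arrowCongr (Equiv.refl (Fin V)))]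
    refine Finset.sum_congr rfl fun x _ => ?_
    rw [← Equiv.sum_comp (τ.symm.arrowCongr (Equiv.refl (Fin V)))]
    refine Finset.sum_congr rfl fun x' _ => ?_
    rw [hp, hp]
    rfl

lemma pad (h : IsComp v T N) (hv : ∀ i, ∑ a, ‖v i a‖ ^ 2 = 1)
    (R : Type) [Fintype R] [DecidableEq R] :
    IsComp v (T ⊕ R) N := by
  obtain ⟨M, hM, hN⟩ := h
  let φ : E × (T ⊕ R → Fin V) ≃ (E × (T → Fin V)) × (R → Fin V) :=
    ((Equiv.refl E).prodCongr (Equiv.sumArrowEquivProdArrow T R (Fin V))).trans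
      (Equiv.prodAssoc _ _ _).symm
  refine ⟨fun o => (Matrix.kroneckerMap (· * ·) (M o) (1 : Matrix (R → Fin V) (R → Fin V) ℂ)).submatrix φ φ,
    ⟨fun o => ((hM.1 o).kronecker PosSemidef.one).submatrix _, ?_⟩, ?_⟩
  · have := congrArg (fun A => (Matrix.kroneckerMap (· * ·) A (1 : Matrix (R → Fin V) (R → Fin V) ℂ)).submatrix φ φ) hM.2
    simp only [Matrix.one_kronecker_one, Matrix.submatrix_one_equiv] at this
    rw [← this]
    ext
    simp [Matrix.sum_apply, Finset.sum_mul]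
  · intro o i
    ext e e'
    simp only [hN, cpr, Matrix.of_apply, Matrix.submatrix_apply]
    rw [← Equiv.sum_comp (Equiv.sumArrowEquivProdArrow T R (Fin V)).symm, Fintype.sum_prod_type]
    refine Finset.sum_congr rfl fun x _ => ?_
    rw [Finset.sum_comm' (t' := Finset.univ) (s' := fun _ => Finset.univ) (by simp)]
    rw [← Equiv.sum_comp (Equiv.sumArrowEquivProdArrow T R (Fin V)).symm, Fintype.sum_prod_type]
    refine Finset.sum_congr rfl fun x' _ => ?_
    have hn := norm_prod_copies (T := R) (hv i)
    simp only [φ, Equiv.trans_apply, Equiv.prodCongr_apply, Prod.map, Equiv.refl_apply,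
      Equiv.apply_symm_apply, Equiv.prodAssoc_symm_apply, Matrix.kroneckerMap_apply,
      Matrix.one_apply, mul_ite, mul_one, mul_zero, ite_mul, zero_mul,
      Fintype.prod_sum_type, Finset.sum_ite_eq, Finset.mem_univ, if_true]
    simp only [Equiv.sumArrowEquivProdArrow, Equiv.coe_fn_symm_mk, Sum.elim_inl, Sum.elim_inr,
      Finset.sum_ite_eq', Finset.mem_univ, if_true]
    rw [← mul_one (M o _ _ * _), ← hn, Finset.mul_sum]
    refine Finset.sum_congr rfl fun y _ => ?_
    simp only [map_mul]
    ring

lemma toFin (h : IsComp v T N) (hv : ∀ i, ∑ a, ‖v i a‖ ^ 2 = 1) {m : ℕ}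
    (hm : Fintype.card T ≤ m) : IsComp v (Fin m) N := by
  refine (h.pad hv (Fin (m - Fintype.card T))).reT (Fintype.equivOfCardEq ?_)
  simp
  omega

end IsComp

lemma IsComp.pi {V : ℕ} {ι : Type*} {v : ι → Fin V → ℂ} {T : Type} [Fintype T] [DecidableEq T]
    {J : Type} [Fintype J] [DecidableEq J]
    {E : J → Type} {O : Type} [∀ j, Fintype (E j)] [∀ j, DecidableEq (E j)]
    [Fintype O] {N : (j : J) → O → ι → Matrix (E j) (E j) ℂ}
    (h : ∀ j, IsComp v T (N j)) :
    IsComp v (J × T) (fun (o : J → O) i => tens (fun j => N j (o j) i)) := by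
  choose M hM hN using h
  let φ : ((j : J) → E j) × (J × T → Fin V) ≃ ((j : J) → E j × (T → Fin V)) :=
    { toFun := fun p j => (p.1 j, fun c => p.2 (j, c))
      invFun := fun f => (fun j => (f j).1, fun p => (f p.1).2 p.2)
      left_inv := fun p => rfl
      right_inv := fun f => rfl }
  refine ⟨fun o => (tens (fun j => M j (o j))).submatrix φ φ,
    ⟨fun o => (tens_psd fun j => (hM j).1 _).submatrix _, ?_⟩, ?_⟩
  · have := congrArg (fun A => A.submatrix φ φ) (sum_tens M)
    simp only [(hM _).2, tens_one, Matrix.submatrix_one_equiv] at this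
    rw [← this]
    ext
    simp [Matrix.sum_apply]
  · intro o i
    ext e e'
    simp only [hN, cpr, tens, Matrix.of_apply, Matrix.submatrix_apply, Fintype.prod_sum]
    rw [← Equiv.sum_comp (Equiv.curry J T (Fin V))]
    refine Finset.sum_congr rfl fun x _ => ?_
    rw [← Equiv.sum_comp (Equiv.curry J T (Fin V))]
    refine Finset.sum_congr rfl fun x' _ => ?_
    simp only [Finset.prod_mul_distrib, Fintype.prod_prod_type, map_prod]
    rfl

lemma tv_sum_left {E A : Type*} [Fintype E] (s : Finset A) (X : A → Matrix E E ℂ)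
    (ρ : Matrix E E ℂ) : tv (∑ a ∈ s, X a) ρ = ∑ a ∈ s, tv (X a) ρ := by
  simp only [tv, Matrix.sum_apply, Finset.sum_mul]
  rw [Finset.sum_comm]
  have : ∀ e, ∑ e', ∑ a ∈ s, X a e e' * ρ e' e = ∑ a ∈ s, ∑ e', X a e e' * ρ e' e :=
    fun e => Finset.sum_comm
  rw [Finset.sum_comm]
  simp only [this]
  rw [Finset.sum_comm]

lemma tv_one {E : Type*} [Fintype E] [DecidableEq E]
    (ρ : Matrix E E ℂ) : tv 1 ρ = ρ.trace := by
  simp [tv, Matrix.one_apply, Matrix.trace]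

lemma tv_smul {E : Type*} [Fintype E] (c : ℂ) (X ρ : Matrix E E ℂ) :
    tv X (c • ρ) = c * tv X ρ := by
  simp only [tv, Matrix.smul_apply, smul_eq_mul, Finset.mul_sum]
  refine Finset.sum_congr rfl fun _ _ => Finset.sum_congr rfl fun _ _ => ?_
  ring

lemma tv_submatrix {E E' : Type*} [Fintype E] [Fintype E'] (φ : E' ≃ E) (X ρ : Matrix E E ℂ) :
    tv (X.submatrix φ φ) (ρ.submatrix φ φ) = tv X ρ := by
  simp only [tv, Matrix.submatrix_apply]
  rw [← Equiv.sum_comp φ]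
  refine Finset.sum_congr rfl fun e _ => ?_
  rw [← Equiv.sum_comp φ]

/-- Core computation: the probability on a product of pure inputs. -/
lemma core_pure (q t V : ℕ) {ι : Type*} (v : ι → Fin V → ℂ) (k : Fin q → ℕ)
    (ρ : Matrix ((j : Fin q) → Fin (k j)) ((j : Fin q) → Fin (k j)) ℂ)
    (M : (j : Fin q) → Matrix (Fin (k j) × (Fin t → Fin V)) (Fin (k j) × (Fin t → Fin V)) ℂ)
    (s : Fin q → ι) :
    (∑ e : (j : Fin q) → Fin (k j), ∑ x : Fin q → Fin t → Fin V,
      ∑ e' : (j : Fin q) → Fin (k j), ∑ x' : Fin q → Fin t → Fin V,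
      (∏ j, M j (e j, x j) (e' j, x' j)) * ρ e' e *
        ∏ j, ((∏ c, v (s j) (x' j c)) * (starRingEnd ℂ) (∏ c, v (s j) (x j c)))) =
    tv (tens fun j => cpr (v (s j)) (M j)) ρ := by
  simp only [tv, tens, cpr, Matrix.of_apply, Fintype.prod_sum, Finset.sum_mul]
  refine Finset.sum_congr rfl fun e _ => ?_
  rw [Finset.sum_comm]
  refine Finset.sum_congr rfl fun e' _ => ?_
  refine Finset.sum_congr rfl fun x _ => ?_
  refine Finset.sum_congr rfl fun x' _ => ?_
  simp only [Finset.prod_mul_distrib]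
  ring

lemma qProb_sum (q t n V : ℕ) {ι K : Type*} [Fintype K] (v : ι → Fin V → ℂ) (k : Fin q → ℕ)
    (ρ : Matrix ((j : Fin q) → Fin (k j)) ((j : Fin q) → Fin (k j)) ℂ)
    (M : (j : Fin q) → (Fin n → Bool) →
      Matrix (Fin (k j) × (Fin t → Fin V)) (Fin (k j) × (Fin t → Fin V)) ℂ)
    (W : K → ℂ) (s : K → Fin q → ι)
    (χ : Matrix (Fin q → Fin t → Fin V) (Fin q → Fin t → Fin V) ℂ)
    (hχ : ∀ x' x, χ x' x = ∑ a, W a *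
      ∏ j, ((∏ c, v (s a j) (x' j c)) * (starRingEnd ℂ) (∏ c, v (s a j) (x j c))))
    (o : Fin q → Fin n → Bool) :
    qProb q t n V k ρ M χ o =
      (∑ a, W a * tv (tens fun j => cpr (v (s a j)) (M j (o j))) ρ).re := by
  unfold qProb
  congr 1
  have hh := fun a => core_pure q t V v k ρ (fun j => M j (o j)) (s a)
  simp only [← hh, hχ, Finset.mul_sum]
  conv_rhs => rw [Finset.sum_comm]
  refine Finset.sum_congr rfl fun e _ => ?_
  conv_rhs => rw [Finset.sum_comm]
  refine Finset.sum_congr rfl fun x _ => ?_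
  conv_rhs => rw [Finset.sum_comm]
  refine Finset.sum_congr rfl fun e' _ => ?_
  conv_rhs => rw [Finset.sum_comm]
  refine Finset.sum_congr rfl fun x' _ => ?_
  refine Finset.sum_congr rfl fun a _ => ?_
  ring

section
variable (q t n V : ℕ) {ι : Type*} [Fintype ι] (w : ι → ℝ) (v : ι → Fin V → ℂ) (k : Fin q → ℕ)
    (ρ : Matrix ((j : Fin q) → Fin (k j)) ((j : Fin q) → Fin (k j)) ℂ)
    (M : (j : Fin q) → (Fin n → Bool) →
      Matrix (Fin (k j) × (Fin t → Fin V)) (Fin (k j) × (Fin t → Fin V)) ℂ)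

lemma qProb_id (o : Fin q → Fin n → Bool) :
    qProb q t n V k ρ M (chiId q t V w v) o =
      (∑ i, (w i : ℂ) * tv (tens fun j => cpr (v i) (M j (o j))) ρ).re := by
  refine qProb_sum q t n V v k ρ M (fun i => (w i : ℂ)) (fun i _ => i) _ ?_ o
  intro x' x
  simp only [chiId, Matrix.of_apply, Finset.prod_mul_distrib, map_prod, mul_assoc]

lemma qProb_ind (o : Fin q → Fin n → Bool) :
    qProb q t n V k ρ M (chiInd q t V w v) o =
      (∑ s : Fin q → ι, (∏ j, (w (s j) : ℂ)) *
        tv (tens fun j => cpr (v (s j)) (M j (o j))) ρ).re := by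
  refine qProb_sum (K := Fin q → ι) q t n V v k ρ M (fun s : Fin q → ι => ∏ j, (w (s j) : ℂ))
    (fun s : Fin q → ι => s) _ ?_ o
  intro x' x
  simp only [chiInd, Matrix.of_apply]
  rw [Fintype.prod_sum]
  refine Finset.sum_congr rfl fun s _ => ?_
  rw [← Finset.prod_mul_distrib]
  exact Finset.prod_congr rfl fun j _ => by ring

end

/-- Difference between identical and independent samples for two parties. -/
noncomputable def diff2 {ι : Type*} [Fintype ι] (w : ι → ℝ) {E1 E2 : Type*} [Fintype E1]
    [Fintype E2] (N1 : ι → Matrix E1 E1 ℂ) (N2 : ι → Matrix E2 E2 ℂ)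
    (ρ : Matrix (E1 × E2) (E1 × E2) ℂ) : ℂ :=
  ∑ i, (w i : ℂ) * tv (Matrix.kroneckerMap (· * ·) (N1 i) (N2 i)) ρ -
    ∑ i, ∑ i', (w i : ℂ) * (w i' : ℂ) * tv (Matrix.kroneckerMap (· * ·) (N1 i) (N2 i')) ρ

section two
variable {V : ℕ} {ι : Type*} [Fintype ι] {w : ι → ℝ} {v : ι → Fin V → ℂ} {ε : ℝ} {T N : ℕ}

lemma two_party_fin (h : SSIq ε 2 T N V w v) {k0 k1 : ℕ}
    {N0 : (Fin N → Bool) → ι → Matrix (Fin k0) (Fin k0) ℂ}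
    {N1 : (Fin N → Bool) → ι → Matrix (Fin k1) (Fin k1) ℂ}
    (h0 : IsComp v (Fin T) N0) (h1 : IsComp v (Fin T) N1)
    (ρ : Matrix (Fin k0 × Fin k1) (Fin k0 × Fin k1) ℂ) (hρ : IsDensity ρ)
    (S : Finset ((Fin N → Bool) × (Fin N → Bool))) :
    |∑ o ∈ S, (diff2 w (N0 o.1) (N1 o.2) ρ).re| ≤ ε := by
  obtain ⟨M0, hM0, hN0⟩ := h0
  obtain ⟨M1, hM1, hN1⟩ := h1
  let k : Fin 2 → ℕ := ![k0, k1]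
  let M : (j : Fin 2) → (Fin N → Bool) →
      Matrix (Fin (k j) × (Fin T → Fin V)) (Fin (k j) × (Fin T → Fin V)) ℂ :=
    fun j => match j with
      | 0 => M0
      | 1 => M1
  let φ : ((j : Fin 2) → Fin (k j)) ≃ Fin k0 × Fin k1 := piFinTwoEquiv (fun j => Fin (k j))
  have key := h k (ρ.submatrix φ φ) M ⟨hρ.1.submatrix _, by
      rw [← hρ.2, Matrix.trace, Matrix.trace, ← Equiv.sum_comp φ]; rfl⟩
    (by intro j; fin_cases j; exacts [hM0, hM1])
    (S.map (piFinTwoEquiv (fun _ => Fin N → Bool)).symm.toEmbedding)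
  have hten : ∀ (o : (Fin N → Bool) × (Fin N → Bool)) (s : Fin 2 → ι),
      (tens fun j => cpr (v (s j)) (M j ((piFinTwoEquiv (fun _ => Fin N → Bool)).symm o j))) =
      (Matrix.kroneckerMap (· * ·) (N0 o.1 (s 0)) (N1 o.2 (s 1))).submatrix φ φ := by
    intro o s
    ext e e'
    simp only [tens, Matrix.of_apply, Fin.prod_univ_two, Matrix.submatrix_apply,
      Matrix.kroneckerMap_apply, hN0, hN1]
    rfl
  convert key using 2
  rw [Finset.sum_map]
  refine Finset.sum_congr rfl fun o _ => ?_
  rw [qProb_id, qProb_ind, ← Complex.sub_re]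
  congr 1
  unfold diff2
  congr 1
  · refine Finset.sum_congr rfl fun i _ => ?_
    erw [hten o (fun _ => i)]
    rw [tv_submatrix]
  · rw [← Equiv.sum_comp (piFinTwoEquiv (fun _ => ι)).symm, Fintype.sum_prod_type]
    refine Finset.sum_congr rfl fun i _ => ?_
    refine Finset.sum_congr rfl fun i' _ => ?_
    erw [hten o]
    rw [tv_submatrix, Fin.prod_univ_two]
    rfl

lemma diff2_submatrix {E1 E2 F1 F2 : Type*} [Fintype E1] [Fintype E2] [Fintype F1] [Fintype F2]
    (N1 : ι → Matrix E1 E1 ℂ) (N2 : ι → Matrix E2 E2 ℂ)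
    (ρ : Matrix (E1 × E2) (E1 × E2) ℂ) (φ : F1 ≃ E1) (φ' : F2 ≃ E2) :
    diff2 w (fun i => (N1 i).submatrix φ φ) (fun i => (N2 i).submatrix φ' φ')
      (ρ.submatrix (φ.prodCongr φ') (φ.prodCongr φ')) = diff2 w N1 N2 ρ := by
  have : ∀ i i', Matrix.kroneckerMap (· * ·) ((N1 i).submatrix φ φ) ((N2 i').submatrix φ' φ') =
      (Matrix.kroneckerMap (· * ·) (N1 i) (N2 i')).submatrix (φ.prodCongr φ') (φ.prodCongr φ') := by
    intro i i'
    ext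
    simp
  simp only [diff2, this, tv_submatrix]

lemma two_party (hv : ∀ i, ∑ a, ‖v i a‖ ^ 2 = 1) (hε : 0 ≤ ε) (h : SSIq ε 2 T N V w v)
    {E1 E2 O1 O2 T1 T2 : Type}
    [Fintype E1] [Fintype E2] [Fintype O1] [Fintype O2] [Fintype T1] [Fintype T2]
    [DecidableEq E1] [DecidableEq E2] [DecidableEq T1] [DecidableEq T2]
    {N1 : O1 → ι → Matrix E1 E1 ℂ} {N2 : O2 → ι → Matrix E2 E2 ℂ}
    (h1 : IsComp v T1 N1) (h2 : IsComp v T2 N2)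
    (c1 : Fintype.card T1 ≤ T) (c2 : Fintype.card T2 ≤ T)
    (g1 : O1 ↪ (Fin N → Bool)) (g2 : O2 ↪ (Fin N → Bool))
    (ρ : Matrix (E1 × E2) (E1 × E2) ℂ) (hρ : ρ.PosSemidef) (S : Finset (O1 × O2)) :
    |∑ o ∈ S, (diff2 w (N1 o.1) (N2 o.2) ρ).re| ≤ ε * ρ.trace.re := by
  have htr := hρ.trace_nonneg
  have htr0 : 0 ≤ ρ.trace.re := (Complex.nonneg_iff.mp htr).1
  have htri : ρ.trace = (ρ.trace.re : ℂ) := by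
    apply Complex.ext
    · simp
    · simp [← (Complex.nonneg_iff.mp htr).2]
  rcases htr0.eq_or_lt with h0 | hpos
  · have : ρ = 0 := hρ.trace_eq_zero_iff.mp (by rw [htri, ← h0]; simp)
    subst this
    simp [diff2, tv]
  · set c : ℝ := ρ.trace.re with hc
    let φ1 := (Fintype.equivFin E1).symm
    let φ2 := (Fintype.equivFin E2).symm
    obtain ⟨N1', k1, e1⟩ := ((h1.toFin hv c1).reindex φ1).push_emb g1
    obtain ⟨N2', k2, e2⟩ := ((h2.toFin hv c2).reindex φ2).push_emb g2
    have key := two_party_fin h k1 k2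
      (((c⁻¹ : ℝ) : ℂ) • ρ.submatrix (φ1.prodCongr φ2) (φ1.prodCongr φ2))
      ⟨(hρ.submatrix _).smul (by
        rw [Complex.nonneg_iff]; simp [hpos.le]), by
        rw [Matrix.trace_smul, Matrix.trace]
        have : ∑ i, (ρ.submatrix (φ1.prodCongr φ2) (φ1.prodCongr φ2)).diag i = ρ.trace := by
          rw [Matrix.trace, ← Equiv.sum_comp (φ1.prodCongr φ2)]; rfl
        rw [this, htri, smul_eq_mul, ← Complex.ofReal_mul, inv_mul_cancel₀ hpos.ne']
        simp⟩
      (S.map (g1.prodMap g2))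
    have e3 : ∀ (A : ι → Matrix _ _ ℂ) (B : ι → Matrix _ _ ℂ)
        (σ : Matrix (Fin (Fintype.card E1) × Fin (Fintype.card E2)) _ ℂ),
        (diff2 w A B (((c⁻¹ : ℝ) : ℂ) • σ)).re = c⁻¹ * (diff2 w A B σ).re := by
      intro A B σ
      rw [← Complex.re_ofReal_mul]
      congr 1
      simp only [diff2, tv_smul, mul_sub, Finset.mul_sum]
      congr 1
      · exact Finset.sum_congr rfl fun _ _ => by ring
      · exact Finset.sum_congr rfl fun _ _ => Finset.sum_congr rfl fun _ _ => by ring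
    rw [Finset.sum_map] at key
    simp only [Function.Embedding.prodMap, Function.Embedding.coeFn_mk, Prod.map, e1, e2, e3,
      diff2_submatrix] at key
    rw [← Finset.mul_sum, abs_mul, abs_of_pos (inv_pos.mpr hpos)] at key
    rwa [inv_mul_le_iff₀ hpos, mul_comm] at key

end two

/-- Partial trace against an operator on the last factor. -/
noncomputable def ptr {E F : Type*} [Fintype F] (Q : Matrix F F ℂ)
    (ρ : Matrix (E × F) (E × F) ℂ) : Matrix E E ℂ :=
  Matrix.of fun a a' => ∑ c, ∑ c', Q c c' * ρ (a, c') (a', c)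

lemma ptr_psd {E F : Type*} [Fintype E] [Fintype F] [DecidableEq E] [DecidableEq F]
    {Q : Matrix F F ℂ} (hQ : Q.PosSemidef)
    {ρ : Matrix (E × F) (E × F) ℂ} (hρ : ρ.PosSemidef) : (ptr Q ρ).PosSemidef := by
  obtain ⟨K, rfl⟩ := psd_eq_conj hQ
  let L : F → Matrix (E × F) E ℂ := fun d => Matrix.of fun p a => if p.1 = a then star (K d p.2) else 0
  have : ptr (Kᴴ * K) ρ = ∑ d, (L d)ᴴ * ρ * L d := by
    ext a a'
    simp only [ptr, Matrix.of_apply, Matrix.sum_apply, Matrix.mul_apply, L,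
      Matrix.conjTranspose_apply, Fintype.sum_prod_type, Finset.sum_mul]
    have h1 : ∀ (d : F) (b : E) (y : F) (a'' : E) (z : F),
        star (if a'' = a then star (K d z) else 0) * ρ (a'', z) (b, y) *
          (if b = a' then star (K d y) else 0) =
        if b = a' then (if a'' = a then star (K d y) * K d z * ρ (a'', z) (b, y) else 0) else 0 := by
      intro d b y a'' z
      split_ifs <;> simp
      ring
    simp only [h1]
    have h2 : ∀ d : F, (∑ b : E, ∑ y : F, ∑ a'' : E, ∑ z : F, if b = a' then
        (if a'' = a then star (K d y) * K d z * ρ (a'', z) (b, y) else 0) else 0) =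
        ∑ y : F, ∑ z : F, star (K d y) * K d z * ρ (a, z) (a', y) := by
      intro d
      rw [Finset.sum_eq_single a' (by intro b _ hb; simp [hb]) (by simp)]
      refine Finset.sum_congr rfl fun y _ => ?_
      rw [Finset.sum_eq_single a (by intro b _ hb; simp [hb]) (by simp)]
      simp
    simp only [h2]
    rw [Finset.sum_comm' (t' := Finset.univ) (s' := fun _ => Finset.univ) (by simp)]
    rw [Finset.sum_comm]
    rw [Finset.sum_comm]
    conv_rhs => rw [Finset.sum_comm]
    rw [Finset.sum_comm]
    refine Finset.sum_congr rfl fun y _ => ?_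
    conv_rhs => rw [Finset.sum_comm]
  rw [this]
  exact posSemidef_sum _ fun d _ => hρ.conjTranspose_mul_mul_same _

lemma tv_ptr {E F : Type*} [Fintype E] [Fintype F] (X : Matrix E E ℂ) (Q : Matrix F F ℂ)
    (ρ : Matrix (E × F) (E × F) ℂ) :
    tv X (ptr Q ρ) = tv (Matrix.kroneckerMap (· * ·) X Q) ρ := by
  simp only [tv, ptr, Matrix.of_apply, Fintype.sum_prod_type, Matrix.kroneckerMap_apply,
    Finset.mul_sum]
  refine Finset.sum_congr rfl fun e _ => ?_
  rw [Finset.sum_comm]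
  refine Finset.sum_congr rfl fun c _ => ?_
  refine Finset.sum_congr rfl fun e' _ => ?_
  refine Finset.sum_congr rfl fun c' _ => ?_
  ring

section split
variable {J : Type} [Fintype J] [DecidableEq J] (A B : J → Prop) [DecidablePred A] [DecidablePred B]

/-- Split a dependent function space into three blocks. -/
def split3 (hAB : ∀ j, A j → ¬ B j) (E : J → Type) :
    ((j : J) → E j) ≃ (((j : {j // A j}) → E j) × ((j : {j // B j}) → E j)) ×
      ((j : {j // ¬ A j ∧ ¬ B j}) → E j) where
  toFun e := ((fun j => e j, fun j => e j), fun j => e j)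
  invFun p j := if hA : A j then p.1.1 ⟨j, hA⟩ else
    if hB : B j then p.1.2 ⟨j, hB⟩ else p.2 ⟨j, hA, hB⟩
  left_inv e := by
    funext j
    by_cases hA : A j
    · simp [hA]
    · by_cases hB : B j <;> simp [hA, hB]
  right_inv p := by
    refine Prod.ext (Prod.ext ?_ ?_) ?_
    · funext ⟨j, hj⟩
      simp [hj]
    · funext ⟨j, hj⟩
      have : ¬ A j := fun h => hAB j h hj
      simp [hj, this]
    · funext ⟨j, hj⟩
      simp [hj.1, hj.2]

lemma prod_split3 (hAB : ∀ j, A j → ¬ B j) (F : J → ℂ) :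
    ∏ j, F j = ((∏ j : {j // A j}, F j) * ∏ j : {j // B j}, F j) *
      ∏ j : {j // ¬ A j ∧ ¬ B j}, F j := by
  have h : ∀ (P : J → Prop) [DecidablePred P],
      ∏ j : {j // P j}, F j = ∏ j, if P j then F j else 1 := by
    intro P _
    rw [← Finset.prod_filter]
    exact (Finset.prod_subtype _ (by simp) F).symm
  rw [h, h, h, ← Finset.prod_mul_distrib, ← Finset.prod_mul_distrib]
  refine Finset.prod_congr rfl fun j _ => ?_
  by_cases hA : A j
  · simp [hA, hAB j hA]
  · by_cases hB : B j <;> simp [hA, hB]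

lemma tens_split3 (hAB : ∀ j, A j → ¬ B j) {E : J → Type}
    (X : (j : J) → Matrix (E j) (E j) ℂ) :
    tens X = (Matrix.kroneckerMap (· * ·) (Matrix.kroneckerMap (· * ·)
      (tens fun j : {j // A j} => X j) (tens fun j : {j // B j} => X j))
      (tens fun j : {j // ¬ A j ∧ ¬ B j} => X j)).submatrix
        (split3 A B hAB E) (split3 A B hAB E) := by
  ext e e'
  simp only [tens, Matrix.of_apply, Matrix.submatrix_apply, Matrix.kroneckerMap_apply]
  rw [prod_split3 A B hAB]
  rfl

end split

lemma out_embed (P : Type) [Fintype P] [DecidableEq P] (n N : ℕ) (h : Fintype.card P * n ≤ N) :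
    Nonempty ((P → Fin n → Bool) ↪ (Fin N → Bool)) := by
  apply Function.Embedding.nonempty_of_card_le
  simp only [Fintype.card_fun, Fintype.card_bool, Fintype.card_fin]
  rw [← pow_mul]
  exact Nat.pow_le_pow_right (by norm_num) (by rw [mul_comm]; exact h)

section step
variable {V : ℕ} {ι : Type*} [Fintype ι] {w : ι → ℝ} {v : ι → Fin V → ℂ} {ε : ℝ} {T N : ℕ}
  {J : Type} [Fintype J] [DecidableEq J] {E : J → Type} [∀ j, Fintype (E j)]
  [∀ j, DecidableEq (E j)]

/-- One hybrid step, with the samples of the other parties fixed. -/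
lemma step_fixed (hv : ∀ i, ∑ a, ‖v i a‖ ^ 2 = 1) (hε : 0 ≤ ε) (h : SSIq ε 2 T N V w v)
    (A B : J → Prop) [DecidablePred A] [DecidablePred B] (hAB : ∀ j, A j → ¬ B j)
    {t n : ℕ} {X : (j : J) → (Fin n → Bool) → ι → Matrix (E j) (E j) ℂ}
    (hX : ∀ j, IsComp v (Fin t) (X j))
    (cA : Fintype.card {j // A j} * t ≤ T) (cB : Fintype.card {j // B j} * t ≤ T)
    (nA : Fintype.card {j // A j} * n ≤ N) (nB : Fintype.card {j // B j} * n ≤ N)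
    (ρ : Matrix ((j : J) → E j) ((j : J) → E j) ℂ) (hρ : ρ.PosSemidef)
    (S : Finset (J → Fin n → Bool)) (s : J → ι) :
    |∑ o ∈ S, (∑ i, (w i : ℂ) * tv (tens fun j => X j (o j)
          (if A j then i else if B j then i else s j)) ρ -
        ∑ i, ∑ i', (w i : ℂ) * (w i' : ℂ) * tv (tens fun j => X j (o j)
          (if A j then i else if B j then i' else s j)) ρ).re| ≤ ε * ρ.trace.re := by
  classical
  obtain ⟨gA⟩ := out_embed {j // A j} n N nA
  obtain ⟨gB⟩ := out_embed {j // B j} n N nB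
  let φ := split3 A B hAB E
  let φo := split3 A B hAB (fun _ => Fin n → Bool)
  let σ := ρ.submatrix φ.symm φ.symm
  have hσ : σ.PosSemidef := hρ.submatrix _
  let XA : ({j // A j} → Fin n → Bool) → ι → Matrix ((j : {j // A j}) → E j) _ ℂ :=
    fun o i => tens (fun j => X j (o j) i)
  let XB : ({j // B j} → Fin n → Bool) → ι → Matrix ((j : {j // B j}) → E j) _ ℂ :=
    fun o i => tens (fun j => X j (o j) i)
  let XC : ({j // ¬ A j ∧ ¬ B j} → Fin n → Bool) →
      Matrix ((j : {j // ¬ A j ∧ ¬ B j}) → E j) _ ℂ :=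
    fun o => tens (fun j => X j (o j) (s j))
  have hXA : IsComp v ({j // A j} × Fin t) XA := IsComp.pi fun j => hX j
  have hXB : IsComp v ({j // B j} × Fin t) XB := IsComp.pi fun j => hX j
  have hXC : ∀ o, (XC o).PosSemidef := fun o => tens_psd fun j => (hX j).psd _ _
  have hXC1 : ∑ o, XC o = 1 := by
    rw [sum_tens (fun (j : {j // ¬ A j ∧ ¬ B j}) o => X j o (s j))]
    simp only [(hX _).sum_eq hv]
    exact tens_one
  have htv : ∀ (p : (({j // A j} → Fin n → Bool) × ({j // B j} → Fin n → Bool)) ×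
        ({j // ¬ A j ∧ ¬ B j} → Fin n → Bool)) (i i' : ι),
      tv (tens fun j => X j (φo.symm p j) (if A j then i else if B j then i' else s j)) ρ =
      tv (Matrix.kroneckerMap (· * ·) (XA p.1.1 i) (XB p.1.2 i')) (ptr (XC p.2) σ) := by
    intro p i i'
    rw [tens_split3 A B hAB, tv_ptr]
    have hρσ : ρ = σ.submatrix φ φ := by
      simp [σ]
    conv_lhs => rw [hρσ]
    rw [tv_submatrix]
    congr 3
    · congr 1
      funext j
      simp [φo, split3, j.2]
    · congr 1
      funext j
      have : ¬ A j := fun h => hAB j h j.2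
      simp [φo, split3, j.2, this]
    · congr 1
      funext j
      simp [φo, split3, j.2.1, j.2.2]
  have hsum : ∀ F : (J → Fin n → Bool) → ℝ, ∑ o ∈ S, F o =
      ∑ oc, ∑ p ∈ Finset.univ.filter (fun p => φo.symm (p, oc) ∈ S), F (φo.symm (p, oc)) := by
    intro F
    have : ∑ o ∈ S, F o = ∑ o, if o ∈ S then F o else 0 := by simp
    rw [this, ← Equiv.sum_comp φo.symm, Fintype.sum_prod_type, Finset.sum_comm]
    simp only [Finset.sum_filter]
  rw [hsum]
  simp only [htv]
  have htr : ε * ρ.trace.re = ∑ oc, ε * (ptr (XC oc) σ).trace.re := by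
    rw [← Finset.mul_sum, ← Complex.re_sum]
    congr 2
    simp only [← tv_one, tv_ptr]
    rw [← tv_sum_left]
    have : ∑ oc, Matrix.kroneckerMap (· * ·) (1 : Matrix (((j : {j // A j}) → E j) ×
        ((j : {j // B j}) → E j)) (((j : {j // A j}) → E j) × ((j : {j // B j}) → E j)) ℂ) (XC oc) = 1 := by
      conv_rhs => rw [← Matrix.one_kronecker_one, ← hXC1]
      ext
      simp [Matrix.sum_apply, Finset.mul_sum]
    rw [this, tv_one, tv_one]
    simp only [σ, Matrix.trace]
    rw [← Equiv.sum_comp φ.symm]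
    rfl
  rw [htr]
  refine (Finset.abs_sum_le_sum_abs _ _).trans (Finset.sum_le_sum fun oc _ => ?_)
  exact two_party hv hε h hXA hXB (by simpa using cA) (by simpa using cB) gA gB
    (ptr (XC oc) σ) (ptr_psd (hXC oc) hσ) _

end step

section hyb
variable {ι : Type*} [Fintype ι] {L : Type} [Fintype L] [DecidableEq L]

lemma resample (w : ι → ℂ) (hw : ∑ i, w i = 1) (F : (L → ι) → ℂ) (l : L) :
    ∑ s : L → ι, (∏ x, w (s x)) * F s =
      ∑ s : L → ι, (∏ x, w (s x)) * ∑ i, w i * F (Function.update s l i) := by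
  rw [← Equiv.sum_comp (Equiv.funSplitAt l ι).symm,
    ← Equiv.sum_comp (Equiv.funSplitAt l ι).symm, Fintype.sum_prod_type, Fintype.sum_prod_type]
  have h1 : ∀ (i : ι) (u : {j // j ≠ l} → ι),
      ∏ x, w ((Equiv.funSplitAt l ι).symm (i, u) x) = w i * ∏ x, w (u x) := by
    intro i u
    rw [Fintype.prod_eq_mul_prod_subtype_ne _ l]
    congr 1
    · simp [Equiv.funSplitAt]
    · refine Finset.prod_congr rfl fun x _ => ?_
      simp [Equiv.funSplitAt, x.2]
  have h2 : ∀ (i i' : ι) (u : {j // j ≠ l} → ι),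
      Function.update ((Equiv.funSplitAt l ι).symm (i, u)) l i' =
        (Equiv.funSplitAt l ι).symm (i', u) := by
    intro i i' u
    funext x
    by_cases hx : x = l
    · subst hx; simp [Equiv.funSplitAt]
    · simp [Equiv.funSplitAt, hx]
  simp only [h1, h2]
  conv_rhs => rw [Finset.sum_comm]
  conv_lhs => rw [Finset.sum_comm]
  refine Finset.sum_congr rfl fun u _ => ?_
  rw [← Finset.sum_mul, ← Finset.sum_mul, hw, one_mul, Finset.mul_sum]
  exact Finset.sum_congr rfl fun i _ => by ring

end hyb

/-- Output amplitude when parties with the same label share a sample. -/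
noncomputable def hyb {ι : Type*} [Fintype ι] (w : ι → ℝ) {L J O : Type} [Fintype L]
    [DecidableEq L] [Fintype J] [DecidableEq J]
    {E : J → Type} [∀ j, Fintype (E j)] (X : (j : J) → O → ι → Matrix (E j) (E j) ℂ)
    (ρ : Matrix ((j : J) → E j) ((j : J) → E j) ℂ) (f : J → L) (o : J → O) : ℂ :=
  ∑ s : L → ι, (∏ l, (w (s l) : ℂ)) * tv (tens fun j => X j (o j) (s (f j))) ρ

section step2
variable {V : ℕ} {ι : Type*} [Fintype ι] {w : ι → ℝ} {v : ι → Fin V → ℂ} {ε : ℝ} {T N : ℕ}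
  {J : Type} [Fintype J] [DecidableEq J] {E : J → Type} [∀ j, Fintype (E j)]
  [∀ j, DecidableEq (E j)] {L : Type} [Fintype L] [DecidableEq L]

lemma step_split (hw0 : ∀ i, 0 ≤ w i) (hw1 : ∑ i, w i = 1)
    (hv : ∀ i, ∑ a, ‖v i a‖ ^ 2 = 1) (hε : 0 ≤ ε) (h : SSIq ε 2 T N V w v)
    (f : J → L) (l0 l' : L) (hl : ∀ j, f j ≠ l') (hl0 : l0 ≠ l')
    (A : J → Prop) [DecidablePred A] (hA : ∀ j, A j → f j = l0)
    {t n : ℕ} {X : (j : J) → (Fin n → Bool) → ι → Matrix (E j) (E j) ℂ}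
    (hX : ∀ j, IsComp v (Fin t) (X j))
    (cA : Fintype.card {j // A j} * t ≤ T)
    (cB : Fintype.card {j // ¬ A j ∧ f j = l0} * t ≤ T)
    (nA : Fintype.card {j // A j} * n ≤ N)
    (nB : Fintype.card {j // ¬ A j ∧ f j = l0} * n ≤ N)
    (ρ : Matrix ((j : J) → E j) ((j : J) → E j) ℂ) (hρ : IsDensity ρ)
    (S : Finset (J → Fin n → Bool)) :
    |∑ o ∈ S, (hyb w X ρ f o - hyb w X ρ (fun j => if A j then l' else f j) o).re| ≤ ε := by
  have hwc : ∑ i, (w i : ℂ) = 1 := by exact_mod_cast hw1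
  have key := fun s : L → ι => step_fixed hv hε h A (fun j => ¬ A j ∧ f j = l0)
    (fun j h h' => h'.1 h) hX cA cB nA nB ρ hρ.1 S (fun j => s (f j))
  set D : (L → ι) → (J → Fin n → Bool) → ℂ := fun s o =>
    (∑ i, (w i : ℂ) * tv (tens fun j => X j (o j)
          (if A j then i else if ¬ A j ∧ f j = l0 then i else s (f j))) ρ -
        ∑ i, ∑ i', (w i : ℂ) * (w i' : ℂ) * tv (tens fun j => X j (o j)
          (if A j then i else if ¬ A j ∧ f j = l0 then i' else s (f j))) ρ) with hD
  have hdiff : ∀ o, hyb w X ρ f o - hyb w X ρ (fun j => if A j then l' else f j) o =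
      ∑ s : L → ι, ((∏ l, w (s l) : ℝ) : ℂ) * D s o := by
    intro o
    have e1 : hyb w X ρ f o = ∑ s : L → ι, (∏ l, (w (s l) : ℂ)) *
        ∑ i, (w i : ℂ) * tv (tens fun j => X j (o j)
          (if A j then i else if ¬ A j ∧ f j = l0 then i else s (f j))) ρ := by
      unfold hyb
      rw [resample (fun i => (w i : ℂ)) hwc
        (fun s => tv (tens fun j => X j (o j) (s (f j))) ρ) l0]
      refine Finset.sum_congr rfl fun s _ => ?_
      congr 1
      refine Finset.sum_congr rfl fun i _ => ?_
      congr 3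
      funext j
      congr 1
      by_cases hj : A j
      · simp [hj, hA j hj]
      · by_cases hf : f j = l0 <;> simp [hj, hf]
    have e2 : hyb w X ρ (fun j => if A j then l' else f j) o =
        ∑ s : L → ι, (∏ l, (w (s l) : ℂ)) *
        ∑ i, ∑ i', (w i : ℂ) * (w i' : ℂ) * tv (tens fun j => X j (o j)
          (if A j then i else if ¬ A j ∧ f j = l0 then i' else s (f j))) ρ := by
      unfold hyb
      rw [resample (fun i => (w i : ℂ)) hwc
        (fun s => tv (tens fun j => X j (o j) (s (if A j then l' else f j))) ρ) l0]
      rw [resample (fun i => (w i : ℂ)) hwc (fun s => ∑ i', (w i' : ℂ) *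
        tv (tens fun j => X j (o j) (Function.update s l0 i' (if A j then l' else f j))) ρ) l']
      refine Finset.sum_congr rfl fun s _ => ?_
      congr 1
      refine Finset.sum_congr rfl fun i _ => ?_
      rw [Finset.mul_sum]
      refine Finset.sum_congr rfl fun i' _ => ?_
      rw [← mul_assoc]
      congr 3
      funext j
      congr 1
      by_cases hj : A j
      · simp [hj, hl0.symm]
      · by_cases hf : f j = l0
        · simp [hj, hf]
        · simp [hj, hf, hl j]
    rw [e1, e2, ← Finset.sum_sub_distrib]
    refine Finset.sum_congr rfl fun s _ => ?_
    rw [← mul_sub, Complex.ofReal_prod]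
  have hW : ∑ s : L → ι, ∏ l, w (s l) = 1 := by
    rw [← Fintype.prod_sum (fun (_ : L) i => w i)]
    simp [hw1]
  have hW0 : ∀ s : L → ι, 0 ≤ ∏ l, w (s l) := fun s => Finset.prod_nonneg fun l _ => hw0 _
  simp only [hdiff, Complex.re_sum, Complex.re_ofReal_mul]
  rw [Finset.sum_comm]
  refine (Finset.abs_sum_le_sum_abs _ _).trans ?_
  calc ∑ s : L → ι, |∑ o ∈ S, (∏ l, w (s l)) * (D s o).re|
      ≤ ∑ s : L → ι, (∏ l, w (s l)) * ε := by
        refine Finset.sum_le_sum fun s _ => ?_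
        rw [← Finset.mul_sum, abs_mul, abs_of_nonneg (hW0 s)]
        refine mul_le_mul_of_nonneg_left ?_ (hW0 s)
        have := key s
        rw [hρ.2, Complex.one_re, mul_one] at this
        exact this
    _ = ε := by rw [← Finset.sum_mul, hW, one_mul]

end step2

section main
variable {V : ℕ} {ι : Type*} [Fintype ι] {w : ι → ℝ} {v : ι → Fin V → ℂ} {ε : ℝ}
  {q : ℕ} {E : Fin q → Type} [∀ j, Fintype (E j)] [∀ j, DecidableEq (E j)]

lemma hyb_inj {O : Type} (X : (j : Fin q) → O → ι → Matrix (E j) (E j) ℂ)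
    (ρ : Matrix ((j : Fin q) → E j) ((j : Fin q) → E j) ℂ) (f : Fin q → Fin q)
    (hf : Function.Injective f) (o : Fin q → O) :
    hyb w X ρ f o = ∑ s : Fin q → ι, (∏ l, (w (s l) : ℂ)) *
      tv (tens fun j => X j (o j) (s j)) ρ := by
  unfold hyb
  let g : Equiv.Perm (Fin q) := Equiv.ofBijective f (Finite.injective_iff_bijective.mp hf)
  rw [← Equiv.sum_comp (g.arrowCongr (Equiv.refl ι))]
  refine Finset.sum_congr rfl fun s _ => ?_
  congr 1
  · rw [← Equiv.prod_comp g]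
    refine Finset.prod_congr rfl fun l _ => ?_
    simp
  · congr 2
    funext j
    congr 1
    have : f j = g j := rfl
    simp [this]

/-- Peeling off parties one at a time. -/
lemma peel (hw0 : ∀ i, 0 ≤ w i) (hw1 : ∑ i, w i = 1)
    (hv : ∀ i, ∑ a, ‖v i a‖ ^ 2 = 1) (hε : 0 ≤ ε) {b t n : ℕ} (hb : 0 < b)
    (h : SSIq ε 2 (b * t) (b * n) V w v)
    {X : (j : Fin q) → (Fin n → Bool) → ι → Matrix (E j) (E j) ℂ}
    (hX : ∀ j, IsComp v (Fin t) (X j))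
    (ρ : Matrix ((j : Fin q) → E j) ((j : Fin q) → E j) ℂ) (hρ : IsDensity ρ)
    (S : Finset (Fin q → Fin n → Bool)) (m : ℕ) :
    ∀ f : Fin q → Fin q, (∀ l, Fintype.card {j // f j = l} ≤ b) →
      q ≤ (Finset.univ.image f).card + m →
      |∑ o ∈ S, (hyb w X ρ f o - hyb w X ρ id o).re| ≤ m * ε := by
  induction m with
  | zero =>
    intro f _ hc
    have hf : Function.Injective f := by
      have : (Finset.univ.image f).card = (Finset.univ : Finset (Fin q)).card := by
        refine le_antisymm Finset.card_image_le ?_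
        simpa using hc
      rw [Finset.card_image_iff] at this
      simpa using this
    simp [hyb_inj X ρ f hf, hyb_inj X ρ id Function.injective_id]
  | succ m ih =>
    intro f hb' hc
    by_cases hf : Function.Injective f
    · simp only [hyb_inj X ρ f hf, hyb_inj X ρ id Function.injective_id, sub_self]
      simp
      positivity
    · have hsurj : ¬ Function.Surjective f := fun hs => hf (Finite.injective_iff_surjective.mpr hs)
      obtain ⟨l', hl'⟩ := not_forall.mp hsurj
      have hl : ∀ j, f j ≠ l' := fun j hj => hl' ⟨j, hj⟩
      obtain ⟨i0, i1, h01, hne⟩ := Function.not_injective_iff.mp hf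
      have s1 := step_split hw0 hw1 hv hε h f (f i0) l' hl (hl i0) (fun j => j = i0)
        (fun j hj => by rw [hj]) hX
        (Nat.mul_le_mul_right _ (by rw [Fintype.card_subtype_eq]; exact hb))
        (Nat.mul_le_mul_right _ ((Fintype.card_subtype_mono _ _ (fun j hj => hj.2)).trans
          (hb' (f i0))))
        (Nat.mul_le_mul_right _ (by rw [Fintype.card_subtype_eq]; exact hb))
        (Nat.mul_le_mul_right _ ((Fintype.card_subtype_mono _ _ (fun j hj => hj.2)).trans
          (hb' (f i0)))) ρ hρ S
      have s2 := ih (fun j => if j = i0 then l' else f j) (by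
        intro l
        by_cases hll : l = l'
        · subst hll
          refine le_trans ?_ hb
          rw [Fintype.card_le_one_iff_subsingleton]
          refine ⟨fun x y => Subtype.ext ?_⟩
          have hx := x.2
          have hy := y.2
          have : ∀ j, (if j = i0 then l else f j) = l → j = i0 := by
            intro j hj
            by_contra hji
            rw [if_neg hji] at hj
            exact hl j hj
          rw [this _ hx, this _ hy]
        · refine le_trans (Fintype.card_subtype_mono _ _ ?_) (hb' l)
          intro j hj
          by_cases hji : j = i0
          · simp [hji] at hj
            exact absurd hj.symm hll
          · simpa [hji] using hj) (by
        have himg : insert l' (Finset.univ.image f) ⊆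
            Finset.univ.image (fun j => if j = i0 then l' else f j) := by
          intro l hlm
          rw [Finset.mem_insert] at hlm
          rw [Finset.mem_image]
          rcases hlm with rfl | hlm
          · exact ⟨i0, Finset.mem_univ _, by simp⟩
          · obtain ⟨j, -, rfl⟩ := Finset.mem_image.mp hlm
            by_cases hji : j = i0
            · subst hji
              exact ⟨i1, Finset.mem_univ _, by simp [Ne.symm hne, h01]⟩
            · exact ⟨j, Finset.mem_univ _, by simp [hji]⟩
        have := Finset.card_le_card himg
        rw [Finset.card_insert_of_notMem (by simpa using hl)] at this
        omega)
      have : ∑ o ∈ S, (hyb w X ρ f o - hyb w X ρ id o).re =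
          ∑ o ∈ S, (hyb w X ρ f o - hyb w X ρ (fun j => if j = i0 then l' else f j) o).re +
          ∑ o ∈ S, (hyb w X ρ (fun j => if j = i0 then l' else f j) o - hyb w X ρ id o).re := by
        rw [← Finset.sum_add_distrib]
        refine Finset.sum_congr rfl fun o _ => ?_
        simp only [Complex.sub_re]
        ring
      rw [this]
      refine (abs_add_le _ _).trans ?_
      push_cast
      linarith

/-- The general amplification bound. -/
lemma amplify (hw0 : ∀ i, 0 ≤ w i) (hw1 : ∑ i, w i = 1)
    (hv : ∀ i, ∑ a, ‖v i a‖ ^ 2 = 1) (hε : 0 ≤ ε) {b t n : ℕ} (hq : 0 < q) (hqb : q ≤ 2 * b)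
    (h : SSIq ε 2 (b * t) (b * n) V w v) : SSIq (((q : ℝ) - 1) * ε) q t n V w v := by
  intro k ρ M hρ hM S
  have hb : 0 < b := by omega
  let X : (j : Fin q) → (Fin n → Bool) → ι → Matrix (Fin (k j)) (Fin (k j)) ℂ :=
    fun j o i => cpr (v i) (M j o)
  have hX : ∀ j, IsComp v (Fin t) (X j) := fun j => ⟨M j, hM j, fun _ _ => rfl⟩
  let l0 : Fin q := ⟨0, hq⟩
  have hwc : ∑ i, (w i : ℂ) = 1 := by exact_mod_cast hw1
  have hid : ∀ o, qProb q t n V k ρ M (chiId q t V w v) o =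
      (hyb w X ρ (fun _ => l0) o).re := by
    intro o
    rw [qProb_id]
    congr 1
    unfold hyb
    rw [resample (fun i => (w i : ℂ)) hwc
      (fun s => tv (tens fun j => X j (o j) (s l0)) ρ) l0]
    simp only [Function.update_self]
    rw [← Finset.sum_mul, ← Fintype.prod_sum (fun (_ : Fin q) i => (w i : ℂ))]
    simp [hwc, X]
  have hind : ∀ o, qProb q t n V k ρ M (chiInd q t V w v) o = (hyb w X ρ id o).re := by
    intro o
    rw [qProb_ind]
    rfl
  have hgoal : ∑ o ∈ S, (qProb q t n V k ρ M (chiId q t V w v) o -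
      qProb q t n V k ρ M (chiInd q t V w v) o) =
      ∑ o ∈ S, (hyb w X ρ (fun _ => l0) o - hyb w X ρ id o).re :=
    Finset.sum_congr rfl fun o _ => by rw [hid, hind, Complex.sub_re]
  rw [hgoal]
  by_cases hqb' : q ≤ b
  · have := peel hw0 hw1 hv hε hb h hX ρ hρ S (q - 1) (fun _ => l0)
      (fun l => (Fintype.card_subtype_le _).trans (by simpa using hqb')) (by
        have : (Finset.univ.image (fun _ : Fin q => l0)).Nonempty :=
          ⟨l0, Finset.mem_image.mpr ⟨l0, Finset.mem_univ _, rfl⟩⟩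
        have := Finset.card_pos.mpr this
        omega)
    rwa [Nat.cast_sub hq, Nat.cast_one] at this
  · push Not at hqb'
    let l1 : Fin q := ⟨b, hqb'⟩
    have h01 : l0 ≠ l1 := by
      intro h
      have := congrArg Fin.val h
      simp [l0, l1] at this
      omega
    have cA : Fintype.card {j : Fin q // j.val < b} ≤ b := by
      have := Fintype.card_le_of_injective (fun j : {j : Fin q // j.val < b} => (⟨j.1.1, j.2⟩ : Fin b))
        (by intro x y hxy; apply Subtype.ext; apply Fin.ext; simpa using hxy)
      simpa using this
    have cB : Fintype.card {j : Fin q // ¬ j.val < b} ≤ b := by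
      have := Fintype.card_le_of_injective
        (fun j : {j : Fin q // ¬ j.val < b} => (⟨j.1.1 - b, by have := j.1.2; omega⟩ : Fin b))
        (by
          intro x y hxy
          apply Subtype.ext
          apply Fin.ext
          have h1 := x.2
          have h2 := y.2
          have := congrArg Fin.val hxy
          simp only at this
          omega)
      simpa using this
    have cB' : Fintype.card {j : Fin q // ¬ j.val < b ∧ l0 = l0} ≤ b :=
      (Fintype.card_subtype_mono _ _ (fun j hj => hj.1)).trans cB
    have s1 := step_split hw0 hw1 hv hε h (fun _ : Fin q => l0) l0 l1 (fun _ => h01) h01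
      (fun j => j.val < b) (fun _ _ => rfl) hX
      (Nat.mul_le_mul_right _ cA) (Nat.mul_le_mul_right _ cB')
      (Nat.mul_le_mul_right _ cA) (Nat.mul_le_mul_right _ cB') ρ hρ S
    have s2 := peel hw0 hw1 hv hε hb h hX ρ hρ S (q - 2) (fun j => if j.val < b then l1 else l0)
      (by
        intro l
        by_cases hl : l = l1
        · refine le_trans (Fintype.card_subtype_mono _ _ ?_) cA
          intro j hj
          by_contra hjb
          rw [if_neg hjb] at hj
          exact h01 (hj.trans hl)
        · refine le_trans (Fintype.card_subtype_mono _ _ ?_) cB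
          intro j hj hjb
          rw [if_pos hjb] at hj
          exact hl hj.symm) (by
        have himg : ({l0, l1} : Finset (Fin q)) ⊆
            Finset.univ.image (fun j : Fin q => if j.val < b then l1 else l0) := by
          intro l hl
          rw [Finset.mem_image]
          simp only [Finset.mem_insert, Finset.mem_singleton] at hl
          rcases hl with rfl | rfl
          · exact ⟨l1, Finset.mem_univ _, by simp [l1]⟩
          · exact ⟨l0, Finset.mem_univ _, by simp [l0, hb]⟩
        have := Finset.card_le_card himg
        rw [Finset.card_pair h01] at this
        omega)
    have : ∑ o ∈ S, (hyb w X ρ (fun _ => l0) o - hyb w X ρ id o).re =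
        ∑ o ∈ S, (hyb w X ρ (fun _ => l0) o -
          hyb w X ρ (fun j => if j.val < b then l1 else l0) o).re +
        ∑ o ∈ S, (hyb w X ρ (fun j => if j.val < b then l1 else l0) o - hyb w X ρ id o).re := by
      rw [← Finset.sum_add_distrib]
      refine Finset.sum_congr rfl fun o _ => ?_
      simp only [Complex.sub_re]
      ring
    rw [this]
    refine (abs_add_le _ _).trans ?_
    rw [Nat.cast_sub (by omega)] at s2
    push_cast at s2
    linarith

end main

/-- Monotone many-party amplification of SSI: (ε, D^{2^r t}, 2^r n)-SSI against 2
parties implies, for all j ≤ r, ((2^{j+1}−1)ε, D^{2^{r−j} t}, 2^{r−j} n)-SSI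
against 2^{j+1} parties; consequently (ε, D^{qt}, qn)-SSI against 2 parties
implies (2qε, D^t, n)-SSI against q parties. -/
theorem ssi_many_party_amplification (V : ℕ) {ι : Type*} [Fintype ι]
    (w : ι → ℝ) (hw0 : ∀ i, 0 ≤ w i) (hw1 : ∑ i, w i = 1)
    (v : ι → Fin V → ℂ) (hv : ∀ i, ∑ a, ‖v i a‖ ^ 2 = 1) (ε : ℝ) (hε : 0 ≤ ε) :
    (∀ (r t n : ℕ), SSIq ε 2 (2 ^ r * t) (2 ^ r * n) V w v →
      ∀ j ≤ r, SSIq (((2 : ℝ) ^ (j + 1) - 1) * ε) (2 ^ (j + 1))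
        (2 ^ (r - j) * t) (2 ^ (r - j) * n) V w v) ∧
    (∀ (q t n : ℕ), 0 < q → SSIq ε 2 (q * t) (q * n) V w v →
      SSIq (2 * (q : ℝ) * ε) q t n V w v) := by
  refine ⟨?_, ?_⟩
  · intro r t n h j hj
    have e : ∀ m, 2 ^ j * (2 ^ (r - j) * m) = 2 ^ r * m := by
      intro m
      rw [← mul_assoc, ← pow_add, Nat.add_sub_cancel' hj]
    have := amplify (q := 2 ^ (j + 1)) (b := 2 ^ j) (t := 2 ^ (r - j) * t) (n := 2 ^ (r - j) * n)
      hw0 hw1 hv hε (by positivity) (by rw [pow_succ]; omega) (by rw [e, e]; exact h)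
    simpa using this
  · intro q t n hq h k ρ M hρ hM S
    refine (amplify (b := q) hw0 hw1 hv hε hq (by omega) h k ρ M hρ hM S).trans ?_
    refine mul_le_mul_of_nonneg_right ?_ hε
    have : (0 : ℝ) ≤ q := Nat.cast_nonneg q
    linarith
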